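/- For every integer k ≥ 1 and every real number x with x² ≠ 1: Σ_{i=1}^{k} U_{i-1}(x)·U_{k-i}(x) = (k·x·U_k(x) - (k+1)·U_{k-1}(x))/(2(x² - 1)). -/

import Mathlib

/-- Evaluation of the Chebyshev polynomial of the first kind `T_n` at a real `x`
(indices extended to all integers via the Chebyshev recurrence). -/
noncomputable def chebT (n : ℤ) (x : ℝ) : ℝ := (Polynomial.Chebyshev.T ℝ n).eval x

/-- Evaluation of the Chebyshev polynomial of the second kind `U_n` at a real `x`
(indices extended to all integers via the Chebyshev recurrence). -/
noncomputable def chebU (n : ℤ) (x : ℝ) : ℝ := (Polynomial.Chebyshev.U ℝ n).eval x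

/-- `Z_n(x) = (U_n(x) - U_{n-1}(x) - 1)/(2(x - 1))`. -/
noncomputable def Zc (n : ℤ) (x : ℝ) : ℝ := (chebU n x - chebU (n - 1) x - 1) / (2 * (x - 1))

theorem chebU_rec (n : ℤ) (x : ℝ) : chebU (n + 2) x = 2 * x * chebU (n + 1) x - chebU n x := by
  simp [chebU, Polynomial.Chebyshev.U_add_two]

/-- The convolution sum indexed by naturals. -/
theorem conv_rec (k : ℕ) (x : ℝ) :
    ∑ j ∈ Finset.range (k + 2), chebU j x * chebU (((k + 2 : ℕ) : ℤ) - 1 - j) x =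
      2 * x * ∑ j ∈ Finset.range (k + 1), chebU j x * chebU (((k + 1 : ℕ) : ℤ) - 1 - j) x
      - ∑ j ∈ Finset.range k, chebU j x * chebU ((k : ℤ) - 1 - j) x + chebU (k + 1) x := by
  have h1 : chebU (-1) x = 0 := by simp [chebU]
  have h2 : chebU (-2) x = -1 := by simp [chebU]
  have e : ∀ j : ℕ, chebU j x * chebU (((k + 2 : ℕ) : ℤ) - 1 - j) x =
      2 * x * (chebU j x * chebU (((k + 1 : ℕ) : ℤ) - 1 - j) x)
        - chebU j x * chebU ((k : ℤ) - 1 - j) x := by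
    intro j
    have := chebU_rec ((k : ℤ) - 1 - j) x
    rw [show ((k + 2 : ℕ) : ℤ) - 1 - j = (k : ℤ) - 1 - j + 2 by push_cast; ring,
      show ((k + 1 : ℕ) : ℤ) - 1 - j = (k : ℤ) - 1 - j + 1 by push_cast; ring, this]
    ring
  rw [Finset.sum_congr rfl fun j _ => e j, Finset.sum_sub_distrib, ← Finset.mul_sum,
    Finset.sum_range_succ _ (k + 1), Finset.sum_range_succ _ (k + 1),
    Finset.sum_range_succ (fun j : ℕ => chebU j x * chebU ((k : ℤ) - 1 - j) x) k,
    show ((k + 1 : ℕ) : ℤ) - 1 - ((k + 1 : ℕ) : ℤ) = -1 by ring,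
    show (k : ℤ) - 1 - ((k + 1 : ℕ) : ℤ) = -2 by push_cast; ring,
    show (k : ℤ) - 1 - (k : ℤ) = -1 by ring, h1, h2]
  push_cast
  ring

theorem conv_eq (x : ℝ) (k : ℕ) :
    (2 * (x ^ 2 - 1)) * ∑ j ∈ Finset.range k, chebU j x * chebU ((k : ℤ) - 1 - j) x =
      k * x * chebU (k : ℤ) x - (k + 1) * chebU ((k : ℤ) - 1) x := by
  induction k using Nat.twoStepInduction with
  | zero => simp [chebU]
  | one => simp [chebU]; ring
  | more k ih1 ih2 =>
    rw [conv_rec]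
    have r1 := chebU_rec (k : ℤ) x
    have r2 := chebU_rec ((k : ℤ) - 1) x
    rw [show (k : ℤ) - 1 + 2 = k + 1 by ring, show (k : ℤ) - 1 + 1 = k by ring] at r2
    rw [show ((k + 1 : ℕ) : ℤ) - 1 = k by push_cast; ring] at *
    rw [show ((k + 2 : ℕ) : ℤ) - 1 = k + 1 by push_cast; ring]
    push_cast at *
    rw [r1]
    linear_combination 2 * x * ih2 - ih1 + (k + 1) * r2

/-- `Σ_{i=1}^{k} U_{i-1}(x)·U_{k-i}(x) = (k·x·U_k(x) - (k+1)·U_{k-1}(x))/(2(x² - 1))`. -/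
theorem sum_U_pred_mul_U_rev (k : ℕ) (hk : 1 ≤ k) (x : ℝ) (hx : x ^ 2 ≠ 1) :
    ∑ i ∈ Finset.Icc (1 : ℤ) (k : ℤ), chebU (i - 1) x * chebU ((k : ℤ) - i) x =
      (k * x * chebU (k : ℤ) x - (k + 1) * chebU ((k : ℤ) - 1) x) / (2 * (x ^ 2 - 1)) := by
  have hne : 2 * (x ^ 2 - 1) ≠ 0 := mul_ne_zero two_ne_zero (sub_ne_zero.mpr hx)
  rw [eq_div_iff hne, mul_comm, ← conv_eq]
  congr 1
  symm
  refine Finset.sum_bij (fun (j : ℕ) _ => (j : ℤ) + 1) ?_ ?_ ?_ ?_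
  · intro j hj
    simp only [Finset.mem_range] at hj
    simp only [Finset.mem_Icc]
    omega
  · intro a _ b _ h
    simpa using h
  · intro b hb
    simp only [Finset.mem_Icc] at hb
    exact ⟨(b - 1).toNat, by simp only [Finset.mem_range]; omega, by omega⟩
  · intro j _
    rw [show (j : ℤ) + 1 - 1 = j by ring, show (k : ℤ) - (j + 1) = k - 1 - j by ring]
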